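/- Let n, k, m be positive integers with k ≥ n+1, and let 1 ≤ l ≤ r ≤ n. Then Σ_{J⊆{1,…,n}, |J|=l, max J=r} S(k, m, J) = A_l · Σ_{𝐩=(p_l,…,p_{n−1})∈ℕ≥1^{n−l}} B_{l,r}(𝐩) Σ_{𝐤∈I(k,r)} C_{l,r}(𝐩,𝐤). -/

import Mathlib

open Finset

/-- `PS p j` is the partial sum `p₁ + ⋯ + p_j` of the positive integers
`pᵢ = p (i-1) + 1` encoded by `p : Fin N → ℕ`. -/
def PS {N : ℕ} (p : Fin N → ℕ) (j : ℕ) : ℕ :=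
  ∑ i ∈ Finset.univ.filter (fun i : Fin N => (i : ℕ) < j), (p i + 1)

/-- `Ikr n k r` is the set `I(k,r)` of tuples `(k₁,…,kₙ)` of positive integers with
`kₙ ≥ 2`, `k₁ + ⋯ + kₙ = k` and `k₁ = ⋯ = k_{r-1} = 1`; the tuple is encoded as
`kv : Fin n → ℕ` with `k_j = kv (j-1)`. -/
def Ikr (n k r : ℕ) : Finset (Fin n → ℕ) :=
  (Fintype.piFinset fun _ : Fin n => Finset.range (k + 1)).filter fun kv =>
    (∀ i, 1 ≤ kv i) ∧ (∀ i : Fin n, (i : ℕ) = n - 1 → 2 ≤ kv i) ∧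
      (∑ i, kv i) = k ∧ ∀ i : Fin n, (i : ℕ) + 2 ≤ r → kv i = 1

/-- `S n k m J` is the quantity `S(k,m,J)`: the sum over `𝐤 ∈ I(k, max J)` and over
tuples `𝐦` of positive integers with `∑_{j∈J} m_j = m` of
`1/(m₁^{k₁}(m₁+m₂)^{k₂}⋯(m₁+⋯+mₙ)^{kₙ})`. -/
noncomputable def S (n k m : ℕ) (J : Finset (Fin n)) : ℝ :=
  ∑ kv ∈ Ikr n k (J.sup fun j => (j : ℕ) + 1),
    ∑' mv : {mv : Fin n → ℕ // (∑ j ∈ J, (mv j + 1)) = m},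
      (∏ i : Fin n, ((PS mv.val ((i : ℕ) + 1) : ℕ) : ℝ) ^ kv i)⁻¹

/-- `kval n kv j` is `k_j`, the `j`-th (1-indexed) component of the tuple encoded by
`kv : Fin n → ℕ`. -/
def kval (n : ℕ) (kv : Fin n → ℕ) (j : ℕ) : ℕ :=
  if h : j - 1 < n then kv ⟨j - 1, h⟩ else 0

/-- `Bf n l r p = B_{l,r}(𝐩) = 1/(p_l(p_l+p_{l+1})⋯(p_l+⋯+p_{r-1}))`, where
`p : Fin (n-l) → ℕ` encodes the positive integers `(p_l,…,p_{n-1})` via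
`p_{l+i} = p i + 1`, so that `p_l + ⋯ + p_{l+j-1} = PS p j`. -/
noncomputable def Bf (n l r : ℕ) (p : Fin (n - l) → ℕ) : ℝ :=
  ∏ j ∈ Finset.Icc 1 (r - l), ((PS p j : ℕ) : ℝ)⁻¹

/-- `Cf n m l r p kv = C_{l,r}(𝐩,𝐤) = 1/((m+p_l+⋯+p_{r-1})^{k_r}⋯(m+p_l+⋯+p_{n-1})^{k_n})`. -/
noncomputable def Cf (n m l r : ℕ) (p : Fin (n - l) → ℕ) (kv : Fin n → ℕ) : ℝ :=
  ∏ j ∈ Finset.Icc r n, (((m + PS p (j - l) : ℕ) : ℝ) ^ kval n kv j)⁻¹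

/-- `Af m l = A_l = ∑_{(p₁,…,p_{l-1}), p₁+⋯+p_{l-1}<m} 1/(p₁(p₁+p₂)⋯(p₁+⋯+p_{l-1}))`. -/
noncomputable def Af (m l : ℕ) : ℝ :=
  ∑ q ∈ (Fintype.piFinset fun _ : Fin (l - 1) => Finset.range m).filter
      (fun q => (∑ i, (q i + 1)) < m),
    ∏ j ∈ Finset.Icc 1 (l - 1), ((PS q j : ℕ) : ℝ)⁻¹

/-!
Fix `J` and `𝐤`, and split `𝐦` into its entries `𝐪` in `J` other than the last (the last one is
then `m - q₁ - ⋯ - q_{l-1}`) and its entries `𝐩` outside `J`. From the index `r = max J` on, the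
partial sums of `𝐦` are `m` plus a partial sum of `𝐩`, so these factors form `C_{l,r}(𝐩,𝐤)`. Before
`r`, all exponents are `1` and the partial sums are `Q a + P b`, where `Q` and `P` are the partial
sums of `𝐪` and `𝐩` and `(a, b)` runs along the lattice path that raises `a` exactly at the indices
in `J`. Summing over `J` thus sums over all lattice paths from the origin to `(l - 1, r - l)`, and
`1 / (Q P) = (1 / Q + 1 / P) / (Q + P)` collapses this sum to `∏ 1 / Q a * ∏ 1 / P b`, the product
of the summand of `A_l` and `B_{l,r}(𝐩)`. Absolute convergence justifies the rearrangement.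
-/

section PartialSums

variable {N : ℕ}

theorem PS_zero (p : Fin N → ℕ) : PS p 0 = 0 := by simp [PS]

theorem PS_pos (p : Fin N → ℕ) (hN : 0 < N) {j : ℕ} (hj : 0 < j) : 0 < PS p j :=
  sum_pos (fun _ _ => Nat.succ_pos _) ⟨⟨0, hN⟩, by simpa using hj⟩

theorem PS_mono (p : Fin N → ℕ) : Monotone (PS p) := fun _ _ hij =>
  sum_le_sum_of_subset <| monotone_filter_right _ fun _ _ h => h.trans_le hij

theorem succ_le_PS_succ (p : Fin N → ℕ) (i : Fin N) : p i + 1 ≤ PS p (i + 1) :=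
  single_le_sum (f := fun i => p i + 1) (fun _ _ => Nat.zero_le _) (by simp)

theorem PS_of_ge (p : Fin N → ℕ) {j : ℕ} (hj : N ≤ j) : PS p j = ∑ i, (p i + 1) := by
  rw [PS, filter_true_of_mem fun i _ => i.isLt.trans_le hj]

theorem PS_init (p : Fin (N + 1) → ℕ) {j : ℕ} (hj : j ≤ N) : PS (Fin.init p) j = PS p j := by
  simp [PS, Fin.init, sum_filter, Fin.sum_univ_castSucc, hj]

theorem PS_comp_orderEmbOfFin {J : Finset (Fin N)} {l : ℕ} (hJ : #J = l) (v : Fin N → ℕ) (j : ℕ) :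
    PS (v ∘ J.orderEmbOfFin hJ) #(J.filter (·.val < j)) =
      ∑ i ∈ J.filter (·.val < j), (v i + 1) := by
  have filter_eq : J.filter (·.val < j) =
      map (J.orderEmbOfFin hJ).toEmbedding {x | (J.orderEmbOfFin hJ x : ℕ) < j} := by
    conv_lhs => rw [← map_orderEmbOfFin_univ J hJ, filter_map]
    rfl
  have lt_card_iff (x : Fin l) :
      (x : ℕ) < #{x | (J.orderEmbOfFin hJ x : ℕ) < j} ↔ (J.orderEmbOfFin hJ x : ℕ) < j :=
    Tuple.lt_card_lt_iff_apply_lt_of_monotone (f := fun x => (J.orderEmbOfFin hJ x : ℕ))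
      (fun _ _ h => (J.orderEmbOfFin hJ).monotone h)
  simp [filter_eq, PS, lt_card_iff]

theorem PS_eq_add_compl {J : Finset (Fin N)} {l t : ℕ} (hJ : #J = l) (hJc : #Jᶜ = t)
    (v : Fin N → ℕ) {j : ℕ} (hj : j ≤ N) :
    PS v j = PS (v ∘ J.orderEmbOfFin hJ) #(range j ∩ J.map Fin.valEmbedding) +
      PS (v ∘ Jᶜ.orderEmbOfFin hJc) #(range j \ J.map Fin.valEmbedding) := by
  have inter_eq : range j ∩ J.map Fin.valEmbedding =
      map Fin.valEmbedding (J.filter (·.val < j)) := by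
    ext x
    simp only [mem_inter, mem_range, mem_map, mem_filter, Fin.valEmbedding_apply]
    grind
  have sdiff_eq : range j \ J.map Fin.valEmbedding =
      map Fin.valEmbedding (Jᶜ.filter (·.val < j)) := by
    ext x
    simp only [mem_sdiff, mem_range, mem_map, mem_filter, mem_compl, Fin.valEmbedding_apply]
    constructor
    · rintro ⟨hx, hxJ⟩
      exact ⟨⟨x, hx.trans_le hj⟩, ⟨fun h => hxJ ⟨_, h, rfl⟩, hx⟩, rfl⟩
    · rintro ⟨i, ⟨hi, hij⟩, rfl⟩
      exact ⟨hij, fun ⟨i', hi', h⟩ => hi (Fin.ext h ▸ hi')⟩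
  rw [inter_eq, sdiff_eq, card_map, card_map, PS_comp_orderEmbOfFin, PS_comp_orderEmbOfFin, PS,
    sum_filter, sum_filter, sum_filter, sum_add_sum_compl]

end PartialSums

section Shuffle

theorem sum_powersetCard_succ_insert {α M : Type*} [DecidableEq α] [AddCommMonoid M] {x : α}
    {A : Finset α} (hx : x ∉ A) (s : ℕ) (f : Finset α → M) :
    ∑ J ∈ powersetCard (s + 1) (insert x A), f J =
      ∑ J ∈ powersetCard (s + 1) A, f J + ∑ J ∈ powersetCard s A, f (insert x J) := by
  have notMem {J : Finset α} {c : ℕ} (hJ : J ∈ powersetCard c A) : x ∉ J :=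
    fun h => hx ((mem_powersetCard.1 hJ).1 h)
  rw [powersetCard_succ_insert hx, sum_union, sum_image]
  · intro J hJ J' hJ' h
    rw [← erase_insert (notMem hJ), ← erase_insert (notMem hJ'), h]
  · refine disjoint_left.2 fun J hJ hJ' => notMem hJ ?_
    obtain ⟨J', -, rfl⟩ := mem_image.1 hJ'
    exact mem_insert_self x J'

variable {K : Type*} [Semifield K]

/-- The weight of the lattice path from the origin whose `j`-th step (counting from `0`) raises the
first coordinate if `j ∈ J` and the second coordinate otherwise: the product of `1 / (Q a + P b)`
over the points `(a, b)` reached by its first `N` steps. -/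
def pathWeight (Q P : ℕ → K) (J : Finset ℕ) (N : ℕ) : K :=
  ∏ j ∈ range N, (Q #(range (j + 1) ∩ J) + P #(range (j + 1) \ J))⁻¹

variable (Q P : ℕ → K)

theorem pathWeight_insert_self (J : Finset ℕ) (N : ℕ) :
    pathWeight Q P (insert N J) N = pathWeight Q P J N := by
  refine prod_congr rfl fun j hj => ?_
  have hN : N ∉ range (j + 1) := by grind
  rw [inter_insert_of_notMem hN, sdiff_insert_of_notMem hN]

theorem pathWeight_succ_of_mem {s t : ℕ} {J : Finset ℕ} (hJ : J ∈ powersetCard s (range (s + t))) :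
    pathWeight Q P J (s + t + 1) = pathWeight Q P J (s + t) * (Q s + P (t + 1))⁻¹ := by
  obtain ⟨hsub, rfl⟩ := mem_powersetCard.1 hJ
  have hsub' : J ⊆ range (#J + t + 1) := hsub.trans (range_subset_range.2 (Nat.le_succ _))
  rw [pathWeight, prod_range_succ, ← pathWeight, inter_eq_right.2 hsub', card_sdiff_of_subset hsub',
    card_range, add_assoc, Nat.add_sub_cancel_left]

theorem pathWeight_insert_succ_of_mem {s t : ℕ} {J : Finset ℕ}
    (hJ : J ∈ powersetCard s (range (s + t))) :
    pathWeight Q P (insert (s + t) J) (s + t + 1) =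
      pathWeight Q P J (s + t) * (Q (s + 1) + P t)⁻¹ := by
  obtain ⟨hsub, rfl⟩ := mem_powersetCard.1 hJ
  have hN : #J + t ∉ J := fun h => by simpa using hsub h
  rw [pathWeight, prod_range_succ, ← pathWeight, pathWeight_insert_self, range_add_one,
    inter_eq_right.2 (insert_subset_insert _ hsub), card_insert_of_notMem hN,
    insert_sdiff_insert, sdiff_insert_of_notMem notMem_range_self, card_sdiff_of_subset hsub,
    card_range, Nat.add_sub_cancel_left]

/-- The sum of the weights of all lattice paths from the origin to `(s, t)`. -/
def pathSum (s t : ℕ) : K :=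
  ∑ J ∈ powersetCard s (range (s + t)), pathWeight Q P J (s + t)

theorem pathSum_succ_succ (s t : ℕ) :
    pathSum Q P (s + 1) (t + 1) =
      (pathSum Q P (s + 1) t + pathSum Q P s (t + 1)) * (Q (s + 1) + P (t + 1))⁻¹ := by
  have hst : s + 1 + t = s + (t + 1) := by ring
  rw [pathSum, ← add_assoc, range_add_one, sum_powersetCard_succ_insert notMem_range_self, add_mul,
    pathSum, pathSum, sum_mul, sum_mul, ← hst]
  congr 1
  · exact sum_congr rfl fun J hJ => pathWeight_succ_of_mem Q P hJ
  · rw [hst]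
    exact sum_congr rfl fun J hJ => pathWeight_insert_succ_of_mem Q P hJ

variable {Q P}

theorem pathSum_zero_left (hQ : Q 0 = 0) (t : ℕ) :
    pathSum Q P 0 t = ∏ b ∈ Icc 1 t, (P b)⁻¹ := by
  have hweight : pathWeight Q P ∅ t = ∏ b ∈ range t, (P (b + 1))⁻¹ := by simp [pathWeight, hQ]
  rw [pathSum, zero_add, powersetCard_zero, sum_singleton, hweight, range_eq_Ico,
    prod_Ico_add' (fun b => (P b)⁻¹), zero_add, Ico_add_one_right_eq_Icc]

theorem pathSum_zero_right (hP : P 0 = 0) (s : ℕ) :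
    pathSum Q P s 0 = ∏ a ∈ Icc 1 s, (Q a)⁻¹ := by
  have hpath : powersetCard s (range s) = {range s} := by
    simpa only [card_range] using powersetCard_self (range s)
  have hweight : pathWeight Q P (range s) s = ∏ a ∈ range s, (Q (a + 1))⁻¹ := by
    refine prod_congr rfl fun j hj => ?_
    have hsub : range (j + 1) ⊆ range s := range_subset_range.2 (mem_range.1 hj)
    rw [inter_eq_left.2 hsub, sdiff_eq_empty_iff_subset.2 hsub, card_range, card_empty, hP,
      add_zero]
  rw [pathSum, add_zero, hpath, sum_singleton, hweight, range_eq_Ico,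
    prod_Ico_add' (fun a => (Q a)⁻¹), zero_add, Ico_add_one_right_eq_Icc]

theorem pathSum_eq_prod_mul_prod (hQ₀ : Q 0 = 0) (hP₀ : P 0 = 0) {s t : ℕ}
    (hQ : ∀ a ∈ Icc 1 s, Q a ≠ 0) (hP : ∀ b ∈ Icc 1 t, P b ≠ 0)
    (hQP : ∀ a ∈ Icc 1 s, ∀ b ∈ Icc 1 t, Q a + P b ≠ 0) :
    pathSum Q P s t = (∏ a ∈ Icc 1 s, (Q a)⁻¹) * ∏ b ∈ Icc 1 t, (P b)⁻¹ := by
  induction s generalizing t with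
  | zero => simp [pathSum_zero_left hQ₀]
  | succ s ihs =>
    induction t with
    | zero => simp [pathSum_zero_right hP₀]
    | succ t iht =>
      have mem_top (c : ℕ) : c + 1 ∈ Icc 1 (c + 1) := mem_Icc.2 ⟨Nat.le_add_left 1 c, le_rfl⟩
      have mem_of_mem {c x : ℕ} (hx : x ∈ Icc 1 c) : x ∈ Icc 1 (c + 1) :=
        Icc_subset_Icc_right (Nat.le_succ c) hx
      rw [pathSum_succ_succ,
        iht (fun b hb => hP b (mem_of_mem hb)) fun a ha b hb => hQP a ha b (mem_of_mem hb),
        ihs (fun a ha => hQ a (mem_of_mem ha)) hP fun a ha => hQP a (mem_of_mem ha),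
        prod_Icc_succ_top (Nat.le_add_left 1 s), prod_Icc_succ_top (Nat.le_add_left 1 t)]
      have hQs := hQ _ (mem_top s)
      have hPt := hP _ (mem_top t)
      have hQPst := hQP _ (mem_top s) _ (mem_top t)
      field_simp
      ring

end Shuffle

section Summability

theorem summable_pi_prod {α : Type*} {g : α → ℝ} (hg : ∀ x, 0 ≤ g x) (hs : Summable g) (n : ℕ) :
    Summable fun v : Fin n → α => ∏ i, g (v i) := by
  induction n with
  | zero => exact (hasSum_fintype _).summable
  | succ n ih =>
    rw [← (Fin.consEquiv fun _ => α).summable_iff]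
    refine (hs.mul_of_nonneg ih hg fun v => prod_nonneg fun i _ => hg _).congr fun x => ?_
    simp [Fin.consEquiv, Fin.prod_univ_succ]

variable {n : ℕ} (v : Fin (n + 1) → ℕ)

theorem prod_succ_mul_PS_le_prod_PS_pow {kv : Fin (n + 1) → ℕ} (hpos : ∀ i, 1 ≤ kv i)
    (hlast : 2 ≤ kv (Fin.last n)) :
    (∏ i, (v i + 1)) * PS v (n + 1) ≤ ∏ i : Fin (n + 1), PS v (i + 1) ^ kv i := by
  have one_le_PS (j : ℕ) : 1 ≤ PS v (j + 1) := PS_pos v n.succ_pos j.succ_pos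
  calc (∏ i, (v i + 1)) * PS v (n + 1)
      ≤ (∏ i : Fin (n + 1), PS v (i + 1)) * PS v (n + 1) := by
        gcongr with i
        exact succ_le_PS_succ v i
    _ = (∏ i : Fin n, PS v (i + 1)) * PS v (n + 1) ^ 2 := by
        rw [Fin.prod_univ_castSucc, sq, mul_assoc]
        rfl
    _ ≤ (∏ i : Fin n, PS v (i + 1) ^ kv i.castSucc) * PS v (n + 1) ^ kv (Fin.last n) := by
        gcongr with i
        · exact le_self_pow₀ (one_le_PS i) (Nat.one_le_iff_ne_zero.1 (hpos _))
        · exact one_le_PS n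
    _ = ∏ i : Fin (n + 1), PS v (i + 1) ^ kv i :=
        (Fin.prod_univ_castSucc fun i : Fin (n + 1) => PS v (i + 1) ^ kv i).symm

theorem prod_succ_le_PS_pow : ∏ i, (v i + 1) ≤ PS v (n + 1) ^ (n + 1) := by
  have bound (i : Fin (n + 1)) : v i + 1 ≤ PS v (n + 1) :=
    (succ_le_PS_succ v i).trans (PS_mono v i.isLt)
  simpa using prod_le_pow_card univ (fun i => v i + 1) _ fun i _ => bound i

theorem prod_succ_rpow_le_prod_PS_pow {kv : Fin (n + 1) → ℕ} (hpos : ∀ i, 1 ≤ kv i)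
    (hlast : 2 ≤ kv (Fin.last n)) :
    ∏ i, ((v i + 1 : ℕ) : ℝ) ^ (1 + ((n + 1 : ℕ) : ℝ)⁻¹) ≤
      ∏ i : Fin (n + 1), (PS v (i + 1) : ℝ) ^ kv i := by
  set A : ℕ := ∏ i, (v i + 1) with hA
  have hApos : 0 < A := prod_pos fun i _ => Nat.succ_pos _
  have root_le : (A : ℝ) ^ ((n + 1 : ℕ) : ℝ)⁻¹ ≤ PS v (n + 1) := by
    rw [Real.rpow_inv_le_iff_of_pos (by positivity) (by positivity) (by positivity),
      Real.rpow_natCast]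
    exact_mod_cast prod_succ_le_PS_pow v
  -- The spare factor `PS v (n + 1)`, shared equally among the variables, gives each exponent `> 1`.
  calc ∏ i, ((v i + 1 : ℕ) : ℝ) ^ (1 + ((n + 1 : ℕ) : ℝ)⁻¹)
      = (A : ℝ) ^ (1 + ((n + 1 : ℕ) : ℝ)⁻¹) := by
        rw [Real.finsetProd_rpow _ _ fun i _ => Nat.cast_nonneg _, hA, Nat.cast_prod]
    _ = A * (A : ℝ) ^ ((n + 1 : ℕ) : ℝ)⁻¹ := by
        rw [Real.rpow_add (by exact_mod_cast hApos), Real.rpow_one]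
    _ ≤ A * PS v (n + 1) := by gcongr
    _ ≤ ∏ i : Fin (n + 1), (PS v (i + 1) : ℝ) ^ kv i := by
        exact_mod_cast prod_succ_mul_PS_le_prod_PS_pow v hpos hlast

theorem summable_inv_prod_PS_pow {kv : Fin (n + 1) → ℕ} (hpos : ∀ i, 1 ≤ kv i)
    (hlast : 2 ≤ kv (Fin.last n)) :
    Summable fun v : Fin (n + 1) → ℕ => (∏ i : Fin (n + 1), (PS v (i + 1) : ℝ) ^ kv i)⁻¹ := by
  have one_lt : 1 < 1 + ((n + 1 : ℕ) : ℝ)⁻¹ := lt_add_of_pos_right _ (by positivity)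
  have summable_one : Summable fun x : ℕ => (((x + 1 : ℕ) : ℝ) ^ (1 + ((n + 1 : ℕ) : ℝ)⁻¹))⁻¹ :=
    (summable_nat_add_iff 1).2 (Real.summable_nat_rpow_inv.2 one_lt)
  refine .of_nonneg_of_le (fun v => by positivity) (fun v => ?_)
    (summable_pi_prod (fun x => by positivity) summable_one (n + 1))
  rw [prod_inv_distrib]
  exact inv_anti₀ (prod_pos fun i _ => by positivity) (prod_succ_rpow_le_prod_PS_pow v hpos hlast)

end Summability

section Fibers

theorem sum_comp_orderEmbOfFin {α M : Type*} [LinearOrder α] [AddCommMonoid M] {J : Finset α}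
    {l : ℕ} (hJ : #J = l) (f : α → M) : ∑ x, f (J.orderEmbOfFin hJ x) = ∑ j ∈ J, f j := by
  conv_rhs => rw [← map_orderEmbOfFin_univ J hJ, sum_map]
  rfl

/-- The tuples `(q₁,…,q_s)` of positive integers with `q₁ + ⋯ + q_s < m`, encoded by `qᵢ - 1`, over
which `Af m (s + 1)` sums. -/
def tuplesSumLT (m s : ℕ) : Finset (Fin s → ℕ) :=
  (Fintype.piFinset fun _ : Fin s => range m).filter fun q => ∑ i, (q i + 1) < m

theorem mem_tuplesSumLT {m s : ℕ} {q : Fin s → ℕ} : q ∈ tuplesSumLT m s ↔ ∑ i, (q i + 1) < m := by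
  simp only [tuplesSumLT, mem_filter, Fintype.mem_piFinset, mem_range, and_iff_right_iff_imp]
  intro hq i
  have := single_le_sum (f := fun i => q i + 1) (fun _ _ => Nat.zero_le _) (mem_univ i)
  omega

/-- Tuples of positive integers with prescribed sum are determined by all entries but the last. -/
def initEquiv (m s : ℕ) :
    {q : Fin (s + 1) → ℕ // ∑ i, (q i + 1) = m} ≃ tuplesSumLT m s where
  toFun q := ⟨Fin.init q.1, by
    have := q.2
    rw [Fin.sum_univ_castSucc] at this
    rw [mem_tuplesSumLT]
    simp only [Fin.init]
    omega⟩
  invFun q := ⟨Fin.snoc (α := fun _ => ℕ) q.1 (m - 1 - ∑ i, (q.1 i + 1)), by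
    have := mem_tuplesSumLT.1 q.2
    simp only [Fin.sum_univ_castSucc, Fin.snoc_castSucc, Fin.snoc_last]
    omega⟩
  left_inv q := by
    have := q.2
    rw [Fin.sum_univ_castSucc] at this
    refine Subtype.ext <| (congrArg (Fin.snoc (α := fun _ => ℕ) (Fin.init q.1)) ?_).trans
      (Fin.snoc_init_self q.1)
    simp only [Fin.init]
    omega
  right_inv q := by simp

variable {n s t : ℕ} {J : Finset (Fin n)}

/-- A tuple of positive integers whose entries in `J` add up to `m` amounts to its restriction to
the complement of `J` and its restriction to `J` without the last entry. -/
noncomputable def fiberEquiv (hJ : #J = s + 1) (hJc : #Jᶜ = t) (m : ℕ) :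
    {v : Fin n → ℕ // ∑ j ∈ J, (v j + 1) = m} ≃ (Fin t → ℕ) × tuplesSumLT m s :=
  let split : (Fin n → ℕ) ≃ (Fin (s + 1) → ℕ) × (Fin t → ℕ) :=
    ((finSumEquivOfFinset hJ hJc).symm.arrowCongr (Equiv.refl ℕ)).trans
      (Equiv.sumArrowEquivProdArrow _ _ _)
  have sum_split (v : Fin n → ℕ) : ∑ j ∈ J, (v j + 1) = m ↔ ∑ x, ((split v).1 x + 1) = m := by
    rw [← sum_comp_orderEmbOfFin hJ fun j => v j + 1]
    rfl
  (split.subtypeEquiv sum_split).trans <| Equiv.prodSubtypeFstEquivSubtypeProd.trans <|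
    ((initEquiv m s).prodCongr (Equiv.refl _)).trans (Equiv.prodComm _ _)

theorem fiberEquiv_apply_fst (hJ : #J = s + 1) (hJc : #Jᶜ = t) {m : ℕ}
    (v : {v : Fin n → ℕ // ∑ j ∈ J, (v j + 1) = m}) :
    (fiberEquiv hJ hJc m v).1 = v.1 ∘ Jᶜ.orderEmbOfFin hJc := rfl

theorem fiberEquiv_apply_snd (hJ : #J = s + 1) (hJc : #Jᶜ = t) {m : ℕ}
    (v : {v : Fin n → ℕ // ∑ j ∈ J, (v j + 1) = m}) :
    ((fiberEquiv hJ hJc m v).2 : Fin s → ℕ) = Fin.init (v.1 ∘ J.orderEmbOfFin hJ) := rfl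

theorem hasSum_sum_tuplesSumLT {M : Type*} [AddCommMonoid M] [TopologicalSpace M] [ContinuousAdd M]
    [RegularSpace M] (hJ : #J = s + 1) (hJc : #Jᶜ = t) {m : ℕ} {G : (Fin t → ℕ) → (Fin s → ℕ) → M}
    {a : M}
    (hG : HasSum (fun v : {v : Fin n → ℕ // ∑ j ∈ J, (v j + 1) = m} =>
      G (v ∘ Jᶜ.orderEmbOfFin hJc) (Fin.init (v ∘ J.orderEmbOfFin hJ))) a) :
    HasSum (fun p => ∑ q ∈ tuplesSumLT m s, G p q) a := by
  simp only [← fiberEquiv_apply_fst hJ hJc, ← fiberEquiv_apply_snd hJ hJc] at hG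
  have hprod : HasSum (fun x : (Fin t → ℕ) × tuplesSumLT m s => G x.1 x.2) a :=
    (fiberEquiv hJ hJc m).hasSum_iff.1 hG
  refine hprod.prod_fiberwise fun p => ?_
  rw [← sum_coe_sort]
  exact hasSum_fintype _

end Fibers

section FixedCardMax

variable {n : ℕ}

theorem sup_val_add_one_eq_iff {J : Finset (Fin n)} {u : ℕ} :
    (J.sup fun j => (j : ℕ) + 1) = u + 1 ↔
      u ∈ J.map Fin.valEmbedding ∧ J.map Fin.valEmbedding ⊆ range (u + 1) := by
  constructor
  · intro h
    have hne : J.Nonempty := nonempty_iff_ne_empty.2 fun hJ => by simp [hJ] at h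
    obtain ⟨i, hi, hmax⟩ := exists_mem_eq_sup J hne fun j => (j : ℕ) + 1
    refine ⟨mem_map.2 ⟨i, hi, Nat.succ_injective (hmax.symm.trans h)⟩, fun x hx => ?_⟩
    obtain ⟨j, hj, rfl⟩ := mem_map.1 hx
    exact mem_range.2 (h ▸ le_sup (f := fun j : Fin n => (j : ℕ) + 1) hj)
  · rintro ⟨hu, hsub⟩
    obtain ⟨i, hi, rfl⟩ := mem_map.1 hu
    refine le_antisymm (Finset.sup_le fun j hj => ?_)
      (le_sup (f := fun j : Fin n => (j : ℕ) + 1) hi)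
    exact mem_range.1 (hsub (mem_map_of_mem _ hj))

theorem lt_of_sup_val_add_one_eq {J : Finset (Fin n)} {u : ℕ}
    (hmax : (J.sup fun j => (j : ℕ) + 1) = u + 1) : u < n := by
  obtain ⟨i, -, rfl⟩ := mem_map.1 (sup_val_add_one_eq_iff.1 hmax).1
  exact i.isLt

theorem map_valEmbedding_filter_mem {A : Finset ℕ} (hA : A ⊆ range n) :
    (univ.filter fun i : Fin n => (i : ℕ) ∈ A).map Fin.valEmbedding = A := by
  ext x
  simp only [mem_map, mem_filter, mem_univ, true_and, Fin.valEmbedding_apply]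
  exact ⟨fun ⟨_, hi, hix⟩ => hix ▸ hi, fun hx => ⟨⟨x, mem_range.1 (hA hx)⟩, hx, rfl⟩⟩

theorem sum_fixed_card_max {M : Type*} [AddCommMonoid M] {s u : ℕ} (hu : u < n)
    (f : Finset ℕ → M) :
    ∑ J ∈ (univ : Finset (Fin n)).powerset.filter
        (fun J : Finset (Fin n) => #J = s + 1 ∧ (J.sup fun j => (j : ℕ) + 1) = u + 1),
      f (J.map Fin.valEmbedding) = ∑ A ∈ powersetCard s (range u), f (insert u A) := by
  have insert_subset_range {A : Finset ℕ} (hA : A ⊆ range u) : insert u A ⊆ range (u + 1) :=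
    range_add_one (n := u) ▸ insert_subset_insert u hA
  have map_filter {A : Finset ℕ} (hA : A ∈ powersetCard s (range u)) :
      (univ.filter fun i : Fin n => (i : ℕ) ∈ insert u A).map Fin.valEmbedding = insert u A :=
    map_valEmbedding_filter_mem <|
      (insert_subset_range (mem_powersetCard.1 hA).1).trans (range_subset_range.2 hu)
  simp only [sup_val_add_one_eq_iff]
  refine sum_nbij' (fun J => (J.map Fin.valEmbedding).erase u)
    (fun A => univ.filter fun i : Fin n => (i : ℕ) ∈ insert u A) ?_ ?_ ?_ ?_ ?_
  · intro J hJ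
    obtain ⟨-, hcard, hmem, hsub⟩ := mem_filter.1 hJ
    rw [range_add_one, subset_insert_iff] at hsub
    exact mem_powersetCard.2 ⟨hsub, by rw [card_erase_of_mem hmem, card_map, hcard]; rfl⟩
  · intro A hA
    obtain ⟨hsub, hcard⟩ := mem_powersetCard.1 hA
    have hu : u ∉ A := fun h => notMem_range_self (hsub h)
    rw [mem_filter, map_filter hA, ← card_map Fin.valEmbedding, map_filter hA,
      card_insert_of_notMem hu, hcard]
    exact ⟨mem_powerset.2 (subset_univ _), rfl, mem_insert_self u A, insert_subset_range hsub⟩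
  · intro J hJ
    obtain ⟨-, -, hmem, -⟩ := mem_filter.1 hJ
    simp [insert_erase hmem, ← Fin.ext_iff]
  · intro A hA
    rw [map_filter hA, erase_insert fun h => notMem_range_self ((mem_powersetCard.1 hA).1 h)]
  · intro J hJ
    rw [insert_erase (mem_filter.1 hJ).2.2.1]

theorem Af_succ (m s : ℕ) :
    Af m (s + 1) = ∑ q ∈ tuplesSumLT m s, ∏ a ∈ Icc 1 s, (PS q a : ℝ)⁻¹ := rfl

theorem pathSum_PS {N N' s t : ℕ} (q : Fin N → ℕ) (p : Fin N' → ℕ) (hs : s ≤ N) (ht : t ≤ N') :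
    pathSum (fun a => (PS q a : ℝ)) (fun b => PS p b) s t =
      (∏ a ∈ Icc 1 s, (PS q a : ℝ)⁻¹) * ∏ b ∈ Icc 1 t, (PS p b : ℝ)⁻¹ := by
  have cast_PS_pos {c N : ℕ} (p : Fin N → ℕ) (hc : c ≤ N) :
      ∀ a ∈ Icc 1 c, (0 : ℝ) < PS p a := fun a ha =>
    have ⟨h1, hac⟩ := mem_Icc.1 ha
    Nat.cast_pos.2 (PS_pos p (h1.trans (hac.trans hc)) h1)
  exact pathSum_eq_prod_mul_prod (by simp [PS_zero]) (by simp [PS_zero])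
    (fun a ha => (cast_PS_pos q hs a ha).ne') (fun b hb => (cast_PS_pos p ht b hb).ne')
    fun a ha b hb => (add_pos (cast_PS_pos q hs a ha) (cast_PS_pos p ht b hb)).ne'

theorem sum_pathWeight_fixed_card_max {m s u : ℕ} (hsu : s ≤ u) (hu : u < n)
    (p : Fin (n - (s + 1)) → ℕ) :
    ∑ J ∈ (univ : Finset (Fin n)).powerset.filter
        (fun J : Finset (Fin n) => #J = s + 1 ∧ (J.sup fun j => (j : ℕ) + 1) = u + 1),
      ∑ q ∈ tuplesSumLT m s,
        pathWeight (fun a => (PS q a : ℝ)) (fun b => PS p b) (J.map Fin.valEmbedding) u =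
    Af m (s + 1) * Bf n (s + 1) (u + 1) p := by
  obtain ⟨t, rfl⟩ := Nat.exists_eq_add_of_le hsu
  rw [sum_comm, Af_succ, sum_mul]
  refine sum_congr rfl fun q _ => ?_
  rw [sum_fixed_card_max hu fun A => pathWeight (fun a => (PS q a : ℝ)) (fun b => PS p b) A (s + t)]
  simp only [pathWeight_insert_self]
  rw [← pathSum, pathSum_PS q p le_rfl (by omega), Bf, Nat.add_sub_add_right,
    Nat.add_sub_cancel_left]

variable {s u : ℕ} {J : Finset (Fin n)}

theorem PS_eq_add_of_le_max {t : ℕ} (hJ : #J = s + 1) (hJc : #Jᶜ = t)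
    (hmax : (J.sup fun j => (j : ℕ) + 1) = u + 1) (v : Fin n → ℕ) {j : ℕ} (hj : j ≤ u) :
    PS v j = PS (Fin.init (v ∘ J.orderEmbOfFin hJ)) #(range j ∩ J.map Fin.valEmbedding) +
      PS (v ∘ Jᶜ.orderEmbOfFin hJc) #(range j \ J.map Fin.valEmbedding) := by
  obtain ⟨hu, -⟩ := sup_val_add_one_eq_iff.1 hmax
  have card_lt : #(range j ∩ J.map Fin.valEmbedding) < s + 1 := by
    rw [← hJ, ← card_map Fin.valEmbedding]
    refine card_lt_card ⟨inter_subset_right, fun hsub => ?_⟩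
    exact (mem_range.1 (mem_inter.1 (hsub hu)).1).not_ge hj
  have hjn : j ≤ n := hj.trans (lt_of_sup_val_add_one_eq hmax).le
  rw [PS_init _ (Nat.lt_succ_iff.1 card_lt), ← PS_eq_add_compl hJ hJc v hjn]

theorem PS_eq_add_of_max_lt {l t : ℕ} (hJ : #J = l) (hJc : #Jᶜ = t)
    (hmax : (J.sup fun j => (j : ℕ) + 1) = u + 1) (v : Fin n → ℕ) {j : ℕ} (huj : u < j)
    (hjn : j ≤ n) :
    PS v j = ∑ i ∈ J, (v i + 1) + PS (v ∘ Jᶜ.orderEmbOfFin hJc) (j - l) := by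
  have hsub : J.map Fin.valEmbedding ⊆ range j :=
    (sup_val_add_one_eq_iff.1 hmax).2.trans (range_subset_range.2 huj)
  rw [PS_eq_add_compl hJ hJc v hjn, inter_eq_right.2 hsub, card_sdiff_of_subset hsub, card_range,
    card_map, hJ, PS_of_ge _ le_rfl]
  simp only [Function.comp_apply, sum_comp_orderEmbOfFin hJ fun i => v i + 1]

theorem kval_val_add_one (kv : Fin n → ℕ) (i : Fin n) : kval n kv (i + 1) = kv i := by
  simp [kval]

theorem inv_prod_PS_pow_eq {k m : ℕ} (hJ : #J = s + 1) (hJc : #Jᶜ = n - (s + 1))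
    (hmax : (J.sup fun j => (j : ℕ) + 1) = u + 1) {kv : Fin n → ℕ}
    (hkv : kv ∈ Ikr n k (u + 1)) {v : Fin n → ℕ} (hv : ∑ j ∈ J, (v j + 1) = m) :
    (∏ i : Fin n, (PS v (i + 1) : ℝ) ^ kv i)⁻¹ =
      pathWeight (fun a => (PS (Fin.init (v ∘ J.orderEmbOfFin hJ)) a : ℝ))
          (fun b => PS (v ∘ Jᶜ.orderEmbOfFin hJc) b) (J.map Fin.valEmbedding) u *
        Cf n m (s + 1) (u + 1) (v ∘ Jᶜ.orderEmbOfFin hJc) kv := by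
  have hun : u < n := lt_of_sup_val_add_one_eq hmax
  have hkv_one (j : ℕ) (hj : j < u) : kval n kv (j + 1) = 1 := by
    rw [kval_val_add_one kv ⟨j, hj.trans hun⟩]
    exact (mem_filter.1 hkv).2.2.2.2 _ (Nat.succ_le_succ hj)
  have prod_range : ∏ i : Fin n, (PS v (i + 1) : ℝ) ^ kv i =
      ∏ j ∈ range n, (PS v (j + 1) : ℝ) ^ kval n kv (j + 1) := by
    simp only [← Fin.prod_univ_eq_prod_range, kval_val_add_one]
  have Cf_eq (p : Fin (n - (s + 1)) → ℕ) : Cf n m (s + 1) (u + 1) p kv =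
      ∏ j ∈ Ico u n, (((m + PS p (j + 1 - (s + 1)) : ℕ) : ℝ) ^ kval n kv (j + 1))⁻¹ := by
    rw [Cf, ← Ico_add_one_right_eq_Icc, prod_Ico_add'
      fun j => (((m + PS p (j - (s + 1)) : ℕ) : ℝ) ^ kval n kv j)⁻¹]
  rw [prod_range, ← prod_inv_distrib, ← prod_range_mul_prod_Ico _ hun.le, pathWeight, Cf_eq]
  congr 1
  · refine prod_congr rfl fun j hj => ?_
    have hju : j < u := mem_range.1 hj
    rw [hkv_one j hju, pow_one, PS_eq_add_of_le_max hJ hJc hmax v hju, Nat.cast_add]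
  · refine prod_congr rfl fun j hj => ?_
    obtain ⟨huj, hjn⟩ := mem_Ico.1 hj
    rw [PS_eq_add_of_max_lt hJ hJc hmax v (Nat.lt_succ_of_le huj) hjn, hv]

theorem hasSum_S (k m : ℕ) (hJ : #J = s + 1) (hmax : (J.sup fun j => (j : ℕ) + 1) = u + 1) :
    HasSum (fun p : Fin (n - (s + 1)) → ℕ =>
      (∑ q ∈ tuplesSumLT m s,
        pathWeight (fun a => (PS q a : ℝ)) (fun b => PS p b) (J.map Fin.valEmbedding) u) *
      ∑ kv ∈ Ikr n k (u + 1), Cf n m (s + 1) (u + 1) p kv) (S n k m J) := by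
  have hJc : #Jᶜ = n - (s + 1) := by rw [card_compl, Fintype.card_fin, hJ]
  simp only [sum_mul_sum, sum_comm (s := tuplesSumLT m s), S, hmax]
  refine hasSum_sum fun kv hkv => hasSum_sum_tuplesSumLT hJ hJc (G := fun p q =>
    pathWeight (fun a => (PS q a : ℝ)) (fun b => PS p b) (J.map Fin.valEmbedding) u *
      Cf n m (s + 1) (u + 1) p kv) ?_
  have summable_term :
      Summable fun v : Fin n → ℕ => (∏ i : Fin n, (PS v (i + 1) : ℝ) ^ kv i)⁻¹ := by
    obtain ⟨n, rfl⟩ := Nat.exists_eq_succ_of_ne_zero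
      (Nat.ne_zero_of_lt (lt_of_sup_val_add_one_eq hmax))
    obtain ⟨-, hpos, hlast, -⟩ := mem_filter.1 hkv
    exact summable_inv_prod_PS_pow hpos (hlast _ rfl)
  have term_eq := fun v : {v : Fin n → ℕ // ∑ j ∈ J, (v j + 1) = m} =>
    inv_prod_PS_pow_eq hJ hJc hmax hkv v.2
  simp only [← term_eq]
  exact (summable_term.subtype _).hasSum

end FixedCardMax

/-- Proposition 2.1 of the paper: for `1 ≤ l ≤ r ≤ n`,
`∑_{|J|=l, max J = r} S(k,m,J) = A_l ∑_𝐩 B_{l,r}(𝐩) ∑_{𝐤∈I(k,r)} C_{l,r}(𝐩,𝐤)`. -/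
theorem sum_S_fixed_card_max (n k m l r : ℕ) (hn : 1 ≤ n) (hk : n + 1 ≤ k) (hm : 1 ≤ m)
    (hl : 1 ≤ l) (hlr : l ≤ r) (hrn : r ≤ n) :
    ∑ J ∈ (Finset.univ : Finset (Fin n)).powerset.filter
        (fun J => J.card = l ∧ (J.sup fun j => (j : ℕ) + 1) = r),
      S n k m J
    = Af m l * ∑' p : Fin (n - l) → ℕ,
        Bf n l r p * ∑ kv ∈ Ikr n k r, Cf n m l r p kv := by
  obtain ⟨s, rfl⟩ := Nat.exists_eq_add_of_le' hl
  obtain ⟨u, rfl⟩ := Nat.exists_eq_add_of_le' (hl.trans hlr)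
  rw [← (hasSum_sum fun J hJ =>
    hasSum_S k m (mem_filter.1 hJ).2.1 (mem_filter.1 hJ).2.2).tsum_eq, ← tsum_mul_left]
  refine tsum_congr fun p => ?_
  rw [← sum_mul, sum_pathWeight_fixed_card_max (Nat.le_of_succ_le_succ hlr) hrn, mul_assoc]
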